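/- Linear heat-semigroup estimate for algebraically localized data. Let d > 0, c ∈ ℝ, M ≥ 4d and r ≥ 3. Then there exists a constant C > 0 such that for every x ∈ ℝ and every t > 0: ∫_ℝ θ_{d,c}(x−y, t) (1+|y|)^{−r} dy ≤ C [ (1 + |x+ct| + √t)^{−r} + e^{−(x+ct)²/(M(1+t))}/√(1+t) ]. -/

import Mathlib

/-!
With `z = x + ct` and `v = 2dt` the integral is the mean of `(1 + |y|)^(-r)` under the Gaussian law
of mean `z` and variance `v`, so `d`, `c` and `M` enter only through elementary comparisons.

For `v ≤ 1`, Peetre's inequality extracts the factor `(1 + |z|)^(-r)`, and what remains is a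
Gaussian moment of order `r`. For `v ≥ 1` and `|z| ≤ √v`, the bound `1/√(2πv)` on the density is
enough, since `exp(-z²/(2v))` is bounded below.

For `v ≥ 1` and `|z| ≥ √v`, cut at `|y| = ε|z|`. Beyond the cut the weight is at most
`(1 + ε|z|)^(-r)`. Before the cut, write `|y| = lε|z|` with `0 ≤ l ≤ 1`: the Gaussian factor loses
at most a fraction `2εl` of its exponent, while by Bernoulli's inequality the part
`(1 + |y|)^(-2εr)` of the weight is at most the power `2εl` of `(1 + ε|z|)^(-r)`. Weighted AM-GM
then bounds the product by `exp(-z²/(2v)) + (1 + ε|z|)^(-r)`. The remaining factor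
`(1 + |y|)^(-(1-2ε)r)` is integrable once `(1 - 2ε)r > 1`, which some `ε > 0` allows since `r > 1`.
-/

open MeasureTheory

noncomputable section

/-- The drifting heat kernel `θ_{d,c}(x,t) = e^{−(x+ct)²/(4dt)}/√(4πdt)`. -/
def driftKernel (d c x t : ℝ) : ℝ :=
  Real.exp (-(x + c * t) ^ 2 / (4 * d * t)) / Real.sqrt (4 * Real.pi * d * t)

open ProbabilityTheory
open scoped NNReal

section Weights

lemma rpow_neg_le_mul_rpow_neg {a b k r : ℝ} (hb : 0 < b) (hk : 0 < k) (hr : 0 ≤ r)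
    (h : b ≤ k * a) : a ^ (-r) ≤ k ^ r * b ^ (-r) :=
  calc a ^ (-r) ≤ (b / k) ^ (-r) :=
        Real.rpow_le_rpow_of_nonpos (by positivity) ((div_le_iff₀' hk).2 h) (neg_nonpos.2 hr)
    _ = k ^ r * b ^ (-r) := by
        rw [Real.div_rpow hb.le hk.le, Real.rpow_neg hk.le, div_inv_eq_mul, mul_comm]

lemma one_add_norm_rpow_neg_le_peetre {E : Type*} [SeminormedAddCommGroup E] {r : ℝ}
    (hr : 0 ≤ r) (y z : E) :
    (1 + ‖y‖) ^ (-r) ≤ (1 + ‖y - z‖) ^ r * (1 + ‖z‖) ^ (-r) := by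
  refine rpow_neg_le_mul_rpow_neg (by positivity) (by positivity) hr ?_
  calc 1 + ‖z‖ ≤ 1 + (‖y‖ + ‖y - z‖) := by gcongr; exact norm_le_norm_add_norm_sub y z
    _ ≤ (1 + ‖y - z‖) * (1 + ‖y‖) := by nlinarith [norm_nonneg y, norm_nonneg (y - z)]

lemma one_add_abs_rpow_le_exp_add_exp {r : ℝ} (hr : 0 ≤ r) (w : ℝ) :
    (1 + |w|) ^ r ≤ Real.exp (r * w) + Real.exp (-r * w) :=
  calc (1 + |w|) ^ r ≤ Real.exp |w| ^ r := by
        gcongr; rw [add_comm]; exact Real.add_one_le_exp |w|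
    _ = Real.exp |r * w| := by rw [← Real.exp_mul, abs_mul, abs_of_nonneg hr, mul_comm]
    _ ≤ Real.exp (r * w) + Real.exp (-r * w) := by
        rw [neg_mul]; exact Real.exp_abs_le (r * w)

lemma integrable_one_add_abs_rpow_neg {s : ℝ} (hs : 1 < s) :
    Integrable fun y : ℝ ↦ (1 + |y|) ^ (-s) :=
  integrable_one_add_norm (by simpa using hs)

lemma exp_mul_one_add_rpow_neg_le_add {K Y r θ l : ℝ} (hY : 0 ≤ Y) (hr : 0 ≤ r)
    (hθ₀ : 0 ≤ θ) (hθ₁ : θ ≤ 1) (hl₀ : 0 ≤ l) (hl₁ : l ≤ 1) :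
    Real.exp (-((1 - θ * l) * K)) * (1 + l * Y) ^ (-(θ * r)) ≤
      Real.exp (-K) + (1 + Y) ^ (-r) := by
  have hθl : θ * l ≤ 1 := mul_le_one₀ hθ₁ hl₀ hl₁
  have bernoulli : (1 + l * Y) ^ (-(θ * r)) ≤ ((1 + Y) ^ (-r)) ^ (θ * l) :=
    calc (1 + l * Y) ^ (-(θ * r)) ≤ ((1 + Y) ^ l) ^ (-(θ * r)) :=
          Real.rpow_le_rpow_of_nonpos (by positivity)
            (rpow_one_add_le_one_add_mul_self (by linarith) hl₀ hl₁)
            (neg_nonpos.2 (by positivity))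
      _ = ((1 + Y) ^ (-r)) ^ (θ * l) := by
          rw [← Real.rpow_mul (by positivity), ← Real.rpow_mul (by positivity)]
          ring_nf
  calc Real.exp (-((1 - θ * l) * K)) * (1 + l * Y) ^ (-(θ * r))
      ≤ Real.exp (-((1 - θ * l) * K)) * ((1 + Y) ^ (-r)) ^ (θ * l) := by gcongr
    _ = Real.exp (-K) ^ (1 - θ * l) * ((1 + Y) ^ (-r)) ^ (θ * l) := by
        rw [← Real.exp_mul]; ring_nf
    _ ≤ (1 - θ * l) * Real.exp (-K) + θ * l * (1 + Y) ^ (-r) :=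
        Real.geom_mean_le_arith_mean2_weighted (by linarith) (by positivity) (by positivity)
          (by positivity) (by ring)
    _ ≤ 1 * Real.exp (-K) + 1 * (1 + Y) ^ (-r) := by
        gcongr
        exact sub_le_self 1 (by positivity)
    _ = Real.exp (-K) + (1 + Y) ^ (-r) := by ring

end Weights

section GaussianMeans

variable {r z : ℝ} {v : ℝ≥0}

lemma gaussianPDFReal_le_inv_sqrt (z : ℝ) (v : ℝ≥0) (y : ℝ) :
    gaussianPDFReal z v y ≤ (√(2 * Real.pi * v))⁻¹ :=
  mul_le_of_le_one_right (by positivity) <| Real.exp_le_one_iff.2 <|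
    div_nonpos_of_nonpos_of_nonneg (neg_nonpos.2 (sq_nonneg _)) (by positivity)

lemma integral_gaussianReal_le_integral {f : ℝ → ℝ} (hf : Integrable f) (hf₀ : 0 ≤ f)
    (z : ℝ) (hv : v ≠ 0) :
    ∫ y, f y ∂gaussianReal z v ≤ (√(2 * Real.pi * v))⁻¹ * ∫ y, f y := by
  rw [integral_gaussianReal_eq_integral_smul hv, ← integral_const_mul]
  refine integral_mono_of_nonneg
    (.of_forall fun y ↦ mul_nonneg (gaussianPDFReal_nonneg z v y) (hf₀ y))
    (hf.const_mul _) (.of_forall fun y ↦ ?_)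
  exact mul_le_mul_of_nonneg_right (gaussianPDFReal_le_inv_sqrt z v y) (hf₀ y)

lemma integrable_exp_mul_sub_gaussianReal (z : ℝ) (v : ℝ≥0) (s : ℝ) :
    Integrable (fun y ↦ Real.exp (s * (y - z))) (gaussianReal z v) := by
  simpa only [mul_sub, Real.exp_sub] using
    (integrable_exp_mul_gaussianReal s).div_const (Real.exp (s * z))

lemma integral_exp_mul_sub_gaussianReal (z : ℝ) (v : ℝ≥0) (s : ℝ) :
    ∫ y, Real.exp (s * (y - z)) ∂gaussianReal z v = Real.exp (v * s ^ 2 / 2) := by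
  have hmgf : ∫ y, Real.exp (s * y) ∂gaussianReal z v = Real.exp (z * s + v * s ^ 2 / 2) :=
    congrFun mgf_id_gaussianReal s
  simp only [mul_sub, Real.exp_sub]
  rw [integral_div, hmgf, ← Real.exp_sub]
  ring_nf

lemma integral_one_add_abs_rpow_neg_gaussianReal_le_exp_mul (hr : 0 ≤ r) (z : ℝ) (v : ℝ≥0) :
    ∫ y, (1 + |y|) ^ (-r) ∂gaussianReal z v ≤
      2 * Real.exp (v * r ^ 2 / 2) * (1 + |z|) ^ (-r) := by
  have hbound (y : ℝ) : (1 + |y|) ^ (-r) ≤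
      (Real.exp (r * (y - z)) + Real.exp (-r * (y - z))) * (1 + |z|) ^ (-r) :=
    (one_add_norm_rpow_neg_le_peetre hr y z).trans <|
      mul_le_mul_of_nonneg_right (one_add_abs_rpow_le_exp_add_exp hr (y - z)) (by positivity)
  have hint (s : ℝ) := integrable_exp_mul_sub_gaussianReal z v s
  calc ∫ y, (1 + |y|) ^ (-r) ∂gaussianReal z v
      ≤ ∫ y, (Real.exp (r * (y - z)) + Real.exp (-r * (y - z))) * (1 + |z|) ^ (-r)
          ∂gaussianReal z v :=
        integral_mono_of_nonneg (.of_forall fun y ↦ by positivity)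
          (((hint r).add (hint (-r))).mul_const _) (.of_forall hbound)
    _ = 2 * Real.exp (v * r ^ 2 / 2) * (1 + |z|) ^ (-r) := by
        rw [integral_mul_const, integral_add (hint r) (hint (-r)),
          integral_exp_mul_sub_gaussianReal, integral_exp_mul_sub_gaussianReal, neg_sq, two_mul]

lemma exp_neg_sub_sq_div_mul_one_add_abs_rpow_neg_le {ε a y : ℝ} (ha : 0 ≤ a) (hr : 0 ≤ r)
    (hε₀ : 0 ≤ ε) (hε : 2 * ε ≤ 1) (hy : |y| ≤ ε * |z|) :
    Real.exp (-(y - z) ^ 2 / a) * (1 + |y|) ^ (-(2 * ε * r)) ≤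
      Real.exp (-z ^ 2 / a) + (1 + ε * |z|) ^ (-r) := by
  obtain ⟨l, hl₀, hl₁, hyl⟩ : ∃ l : ℝ, 0 ≤ l ∧ l ≤ 1 ∧ |y| = l * (ε * |z|) :=
    ⟨|y| / (ε * |z|), by positivity, div_le_one_of_le₀ hy (by positivity),
      (div_mul_cancel_of_imp fun h ↦ le_antisymm (h ▸ hy) (abs_nonneg y)).symm⟩
  have hsq : (1 - 2 * ε * l) * z ^ 2 ≤ (y - z) ^ 2 :=
    calc (1 - 2 * ε * l) * z ^ 2 = z ^ 2 - 2 * (|y| * |z|) := by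
          rw [hyl, ← sq_abs z]; ring
      _ ≤ z ^ 2 - 2 * (y * z) := by rw [← abs_mul]; gcongr; exact le_abs_self _
      _ ≤ (y - z) ^ 2 := by nlinarith [sq_nonneg y]
  have hexp : Real.exp (-(y - z) ^ 2 / a) ≤ Real.exp (-((1 - 2 * ε * l) * (z ^ 2 / a))) := by
    rw [← mul_div_assoc, ← neg_div]
    gcongr
  calc Real.exp (-(y - z) ^ 2 / a) * (1 + |y|) ^ (-(2 * ε * r))
      ≤ Real.exp (-((1 - 2 * ε * l) * (z ^ 2 / a))) * (1 + l * (ε * |z|)) ^ (-(2 * ε * r)) := by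
        rw [hyl]; gcongr
    _ ≤ Real.exp (-(z ^ 2 / a)) + (1 + ε * |z|) ^ (-r) :=
        exp_mul_one_add_rpow_neg_le_add (by positivity) hr (by positivity) hε hl₀ hl₁
    _ = Real.exp (-z ^ 2 / a) + (1 + ε * |z|) ^ (-r) := by rw [neg_div]

lemma gaussianPDFReal_mul_one_add_abs_rpow_neg_le {ε : ℝ} (hr : 0 ≤ r) (hε₀ : 0 ≤ ε)
    (hε : 2 * ε ≤ 1) (z : ℝ) (v : ℝ≥0) (y : ℝ) :
    gaussianPDFReal z v y * (1 + |y|) ^ (-r) ≤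
      (1 + ε * |z|) ^ (-r) * gaussianPDFReal z v y +
        (√(2 * Real.pi * v))⁻¹ * (Real.exp (-z ^ 2 / (2 * v)) + (1 + ε * |z|) ^ (-r)) *
          (1 + |y|) ^ (-((1 - 2 * ε) * r)) := by
  have hpdf := gaussianPDFReal_nonneg z v y
  rcases le_total |y| (ε * |z|) with hy | hy
  · refine le_add_of_nonneg_of_le (by positivity) ?_
    have hsplit : (1 + |y|) ^ (-r) =
        (1 + |y|) ^ (-(2 * ε * r)) * (1 + |y|) ^ (-((1 - 2 * ε) * r)) := by
      rw [← Real.rpow_add (by positivity)]; ring_nf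
    rw [hsplit, ← mul_assoc, gaussianPDFReal, mul_assoc (√(2 * Real.pi * v))⁻¹]
    gcongr
    exact exp_neg_sub_sq_div_mul_one_add_abs_rpow_neg_le (by positivity) hr hε₀ hε hy
  · refine le_add_of_le_of_nonneg ?_ (by positivity)
    rw [mul_comm]
    gcongr ?_ * _
    exact Real.rpow_le_rpow_of_nonpos (by positivity) (by gcongr) (neg_nonpos.2 hr)

lemma integral_one_add_abs_rpow_neg_gaussianReal_le_of_cutoff {ε : ℝ} (hr : 0 ≤ r)
    (hε₀ : 0 ≤ ε) (hεr : 1 < (1 - 2 * ε) * r) (z : ℝ) (hv : v ≠ 0) :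
    ∫ y, (1 + |y|) ^ (-r) ∂gaussianReal z v ≤
      (1 + ε * |z|) ^ (-r) +
        (√(2 * Real.pi * v))⁻¹ * (Real.exp (-z ^ 2 / (2 * v)) + (1 + ε * |z|) ^ (-r)) *
          ∫ y : ℝ, (1 + |y|) ^ (-((1 - 2 * ε) * r)) := by
  have hε : 2 * ε ≤ 1 := by nlinarith
  have hpdf := (integrable_gaussianPDFReal z v).const_mul ((1 + ε * |z|) ^ (-r))
  have htail := (integrable_one_add_abs_rpow_neg hεr).const_mul
    ((√(2 * Real.pi * v))⁻¹ * (Real.exp (-z ^ 2 / (2 * v)) + (1 + ε * |z|) ^ (-r)))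
  rw [integral_gaussianReal_eq_integral_smul hv]
  refine (integral_mono_of_nonneg
    (.of_forall fun y ↦ mul_nonneg (gaussianPDFReal_nonneg z v y) (by positivity))
    (hpdf.add htail)
    (.of_forall (gaussianPDFReal_mul_one_add_abs_rpow_neg_le hr hε₀ hε z v))).trans_eq ?_
  simp only [Pi.add_apply]
  rw [integral_add hpdf htail, integral_const_mul, integral_const_mul,
    integral_gaussianPDFReal_eq_one z hv, mul_one]

end GaussianMeans

section Regimes

/-- The envelope `(1 + |z| + √v)^(-r) + exp(-z²/(2v)) / √(1+v)` which, up to a constant, dominates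
the mean of `(1 + |y|)^(-r)` under the Gaussian law of mean `z` and variance `v`: the first term is
the algebraic tail, the second the Gaussian spreading of the mass of the weight. -/
def algebraicGaussianEnvelope (r z : ℝ) (v : ℝ≥0) : ℝ :=
  (1 + |z| + √v) ^ (-r) + Real.exp (-z ^ 2 / (2 * v)) / √(1 + v)

variable {r : ℝ}

lemma algebraicGaussianEnvelope_nonneg (r z : ℝ) (v : ℝ≥0) :
    0 ≤ algebraicGaussianEnvelope r z v := by
  unfold algebraicGaussianEnvelope
  positivity

lemma inv_sqrt_two_pi_mul_le_inv_sqrt_one_add {v : ℝ} (hv : 1 ≤ v) :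
    (√(2 * Real.pi * v))⁻¹ ≤ (√(1 + v))⁻¹ := by
  gcongr
  nlinarith [Real.pi_gt_three]

lemma integral_gaussianReal_le_envelope_of_var_le_one (hr : 0 ≤ r) (z : ℝ) {v : ℝ≥0}
    (hv : v ≤ 1) :
    ∫ y, (1 + |y|) ^ (-r) ∂gaussianReal z v ≤
      2 * Real.exp (r ^ 2 / 2) * 2 ^ r * algebraicGaussianEnvelope r z v := by
  have hv' : (v : ℝ) ≤ 1 := mod_cast hv
  have hweight : (1 + |z|) ^ (-r) ≤ 2 ^ r * (1 + |z| + √v) ^ (-r) :=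
    rpow_neg_le_mul_rpow_neg (by positivity) two_pos hr
      (by linarith [Real.sqrt_le_one.2 hv', abs_nonneg z])
  calc ∫ y, (1 + |y|) ^ (-r) ∂gaussianReal z v
      ≤ 2 * Real.exp (v * r ^ 2 / 2) * (1 + |z|) ^ (-r) :=
        integral_one_add_abs_rpow_neg_gaussianReal_le_exp_mul hr z v
    _ ≤ 2 * Real.exp (r ^ 2 / 2) * (2 ^ r * (1 + |z| + √v) ^ (-r)) := by
        gcongr
        exact mul_le_of_le_one_left (sq_nonneg r) hv'
    _ ≤ 2 * Real.exp (r ^ 2 / 2) * 2 ^ r * algebraicGaussianEnvelope r z v := by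
        rw [← mul_assoc]
        gcongr
        exact le_add_of_nonneg_right (by positivity)

lemma integral_gaussianReal_le_envelope_of_abs_le_sqrt_var (hr : 1 < r) {z : ℝ} {v : ℝ≥0}
    (hv : 1 ≤ v) (hz : |z| ≤ √v) :
    ∫ y, (1 + |y|) ^ (-r) ∂gaussianReal z v ≤
      Real.exp (1 / 2) * (∫ y : ℝ, (1 + |y|) ^ (-r)) * algebraicGaussianEnvelope r z v := by
  have hv' : (1 : ℝ) ≤ v := mod_cast hv
  have hmass : 0 ≤ ∫ y : ℝ, (1 + |y|) ^ (-r) := integral_nonneg fun y ↦ by positivity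
  have hexp : 1 ≤ Real.exp (1 / 2) * Real.exp (-z ^ 2 / (2 * v)) := by
    have hz2 : z ^ 2 ≤ v := sq_abs z ▸ (Real.le_sqrt (abs_nonneg z) v.2).1 hz
    rw [← Real.exp_add, Real.one_le_exp_iff, neg_div, ← sub_eq_add_neg, sub_nonneg,
      div_le_div_iff₀ (by positivity) two_pos]
    linarith
  calc ∫ y, (1 + |y|) ^ (-r) ∂gaussianReal z v
      ≤ (√(2 * Real.pi * v))⁻¹ * ∫ y : ℝ, (1 + |y|) ^ (-r) :=
        integral_gaussianReal_le_integral (integrable_one_add_abs_rpow_neg hr)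
          (fun y ↦ by positivity) z (by positivity)
    _ ≤ (√(1 + v))⁻¹ * (∫ y : ℝ, (1 + |y|) ^ (-r)) *
          (Real.exp (1 / 2) * Real.exp (-z ^ 2 / (2 * v))) := by
        refine (mul_le_mul_of_nonneg_right (inv_sqrt_two_pi_mul_le_inv_sqrt_one_add hv')
          hmass).trans (le_mul_of_one_le_right (by positivity) hexp)
    _ = Real.exp (1 / 2) * (∫ y : ℝ, (1 + |y|) ^ (-r)) *
          (Real.exp (-z ^ 2 / (2 * v)) / √(1 + v)) := by ring
    _ ≤ Real.exp (1 / 2) * (∫ y : ℝ, (1 + |y|) ^ (-r)) * algebraicGaussianEnvelope r z v := by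
        gcongr
        exact le_add_of_nonneg_left (by positivity)

lemma integral_gaussianReal_le_envelope_of_sqrt_var_le_abs {ε z : ℝ} {v : ℝ≥0} (hr : 0 ≤ r)
    (hε₀ : 0 < ε) (hεr : 1 < (1 - 2 * ε) * r) (hv : 1 ≤ v) (hz : √v ≤ |z|) :
    ∫ y, (1 + |y|) ^ (-r) ∂gaussianReal z v ≤
      (1 + ∫ y : ℝ, (1 + |y|) ^ (-((1 - 2 * ε) * r))) * (2 / ε) ^ r *
        algebraicGaussianEnvelope r z v := by
  have hv' : (1 : ℝ) ≤ v := mod_cast hv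
  set J := ∫ y : ℝ, (1 + |y|) ^ (-((1 - 2 * ε) * r))
  have : 0 ≤ J := integral_nonneg fun y ↦ by positivity
  set A := (2 / ε) ^ r
  set T := (1 + ε * |z|) ^ (-r)
  set G := Real.exp (-z ^ 2 / (2 * v)) / √(1 + v) with hG
  have hε : 2 * ε ≤ 1 := by nlinarith
  have hA : 1 ≤ A := Real.one_le_rpow ((one_le_div₀ hε₀).2 (by linarith)) hr
  have hT : T ≤ A * (1 + |z| + √v) ^ (-r) := by
    refine rpow_neg_le_mul_rpow_neg (by positivity) (by positivity) hr ?_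
    calc 1 + |z| + √v ≤ 2 + 2 * |z| := by linarith
      _ ≤ 2 / ε + 2 * |z| := by gcongr; rw [le_div_iff₀ hε₀]; linarith
      _ = 2 / ε * (1 + ε * |z|) := by field_simp
  have hdensity : (√(2 * Real.pi * v))⁻¹ * (Real.exp (-z ^ 2 / (2 * v)) + T) ≤ G + T := by
    have hsqrt : (√(1 + v))⁻¹ ≤ 1 := inv_le_one_of_one_le₀ (Real.one_le_sqrt.2 (by linarith))
    calc (√(2 * Real.pi * v))⁻¹ * (Real.exp (-z ^ 2 / (2 * v)) + T)
        ≤ (√(1 + v))⁻¹ * (Real.exp (-z ^ 2 / (2 * v)) + T) :=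
          mul_le_mul_of_nonneg_right (inv_sqrt_two_pi_mul_le_inv_sqrt_one_add hv') (by positivity)
      _ = G + (√(1 + v))⁻¹ * T := by rw [hG]; ring
      _ ≤ G + T := by gcongr; exact mul_le_of_le_one_left (by positivity) hsqrt
  calc ∫ y, (1 + |y|) ^ (-r) ∂gaussianReal z v
      ≤ T + (√(2 * Real.pi * v))⁻¹ * (Real.exp (-z ^ 2 / (2 * v)) + T) * J :=
        integral_one_add_abs_rpow_neg_gaussianReal_le_of_cutoff hr hε₀.le hεr z (by positivity)
    _ ≤ (G + T) + (G + T) * J := by gcongr; exact le_add_of_nonneg_left (by positivity)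
    _ = (1 + J) * (T + G) := by ring
    _ ≤ (1 + J) * (A * (1 + |z| + √v) ^ (-r) + A * G) := by
        gcongr; exact le_mul_of_one_le_left (by positivity) hA
    _ = (1 + J) * A * algebraicGaussianEnvelope r z v := by
        rw [algebraicGaussianEnvelope]; ring

theorem exists_integral_gaussianReal_le_mul_envelope (hr : 1 < r) :
    ∃ C : ℝ, 0 < C ∧ ∀ (z : ℝ) (v : ℝ≥0),
      ∫ y, (1 + |y|) ^ (-r) ∂gaussianReal z v ≤ C * algebraicGaussianEnvelope r z v := by
  have hr₀ : 0 < r := zero_lt_one.trans hr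
  obtain ⟨ε, hε₀, hεr⟩ : ∃ ε : ℝ, 0 < ε ∧ 1 < (1 - 2 * ε) * r := by
    refine ⟨(r - 1) / (4 * r), div_pos (by linarith) (by linarith), ?_⟩
    field_simp
    linarith
  let C₁ := 2 * Real.exp (r ^ 2 / 2) * 2 ^ r
  let C₂ := Real.exp (1 / 2) * ∫ y : ℝ, (1 + |y|) ^ (-r)
  let C₃ := (1 + ∫ y : ℝ, (1 + |y|) ^ (-((1 - 2 * ε) * r))) * (2 / ε) ^ r
  refine ⟨max C₁ (max C₂ C₃), lt_max_of_lt_left (by positivity), fun z v ↦ ?_⟩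
  have weaken {C : ℝ} (hC : C ≤ max C₁ (max C₂ C₃)) :=
    mul_le_mul_of_nonneg_right hC (algebraicGaussianEnvelope_nonneg r z v)
  rcases le_total v 1 with hv | hv
  · exact (integral_gaussianReal_le_envelope_of_var_le_one hr₀.le z hv).trans
      (weaken <| le_max_left _ _)
  rcases le_total |z| √v with hz | hz
  · exact (integral_gaussianReal_le_envelope_of_abs_le_sqrt_var hr hv hz).trans
      (weaken <| (le_max_left _ _).trans (le_max_right _ _))
  · exact (integral_gaussianReal_le_envelope_of_sqrt_var_le_abs hr₀.le hε₀ hεr hv hz).trans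
      (weaken <| (le_max_right _ _).trans (le_max_right _ _))

end Regimes

section DriftKernel

variable {d t : ℝ} {v : ℝ≥0}

lemma driftKernel_sub_eq_gaussianPDFReal (hv : (v : ℝ) = 2 * d * t) (c x y : ℝ) :
    driftKernel d c (x - y) t = gaussianPDFReal (x + c * t) v y := by
  rw [driftKernel, gaussianPDFReal, hv, div_eq_inv_mul]
  ring_nf

lemma integral_driftKernel_mul_eq_integral_gaussianReal (hv : (v : ℝ) = 2 * d * t) (hv₀ : v ≠ 0)
    (c x : ℝ) (f : ℝ → ℝ) :
    ∫ y, driftKernel d c (x - y) t * f y = ∫ y, f y ∂gaussianReal (x + c * t) v := by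
  simp only [integral_gaussianReal_eq_integral_smul hv₀, smul_eq_mul,
    driftKernel_sub_eq_gaussianPDFReal hv]

lemma sqrt_le_mul_sqrt {a b k : ℝ} (hk : 1 ≤ k) (hb : 0 ≤ b) (h : a ≤ k * b) :
    √a ≤ k * √b :=
  Real.sqrt_le_iff.2 ⟨by positivity, by
    rw [mul_pow, Real.sq_sqrt hb]
    exact h.trans (by gcongr; exact le_self_pow₀ hk two_ne_zero)⟩

lemma algebraicGaussianEnvelope_le_of_var_eq {M r : ℝ} (hd : 0 < d) (hM : 4 * d ≤ M)
    (hr : 1 ≤ r) (ht : 0 < t) (hv : (v : ℝ) = 2 * d * t) (z : ℝ) :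
    algebraicGaussianEnvelope r z v ≤ (1 + (2 * d)⁻¹) ^ r *
      ((1 + |z| + √t) ^ (-r) + Real.exp (-z ^ 2 / (M * (1 + t))) / √(1 + t)) := by
  set k := 1 + (2 * d)⁻¹
  have hk : 1 ≤ k := le_add_of_nonneg_right (by positivity)
  have hkv : k * v = 2 * d * t + t := by simp only [k, hv]; field_simp
  have hsqrt : √t ≤ k * √v := sqrt_le_mul_sqrt hk v.2 (by rw [hkv]; linarith)
  have hsqrt_one_add : √(1 + t) ≤ k * √(1 + v) :=
    sqrt_le_mul_sqrt hk (by positivity) (by rw [mul_add, hkv]; nlinarith)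
  have halg : (1 + |z| + √v) ^ (-r) ≤ k ^ r * (1 + |z| + √t) ^ (-r) :=
    rpow_neg_le_mul_rpow_neg (by positivity) (by positivity) (by linarith)
      (by nlinarith [abs_nonneg z])
  have hexp : Real.exp (-z ^ 2 / (2 * v)) ≤ Real.exp (-z ^ 2 / (M * (1 + t))) := by
    rw [neg_div, neg_div, hv, ← mul_assoc, ← mul_assoc]
    gcongr <;> linarith
  have hgauss : Real.exp (-z ^ 2 / (2 * v)) / √(1 + v) ≤
      k ^ r * (Real.exp (-z ^ 2 / (M * (1 + t))) / √(1 + t)) :=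
    calc Real.exp (-z ^ 2 / (2 * v)) / √(1 + v)
        ≤ Real.exp (-z ^ 2 / (M * (1 + t))) / (√(1 + t) / k) := by
          gcongr
          exact (div_le_iff₀' (by positivity)).2 hsqrt_one_add
      _ = k * (Real.exp (-z ^ 2 / (M * (1 + t))) / √(1 + t)) := by
          rw [div_div_eq_mul_div]; ring
      _ ≤ k ^ r * (Real.exp (-z ^ 2 / (M * (1 + t))) / √(1 + t)) := by
          gcongr
          exact Real.self_le_rpow_of_one_le hk hr
  rw [algebraicGaussianEnvelope, mul_add]
  exact add_le_add halg hgauss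

end DriftKernel

theorem heat_semigroup_estimate_algebraic_data_general
    (d c M r : ℝ) (hd : 0 < d) (hM : 4 * d ≤ M) (hr : 1 < r) :
    ∃ C : ℝ, 0 < C ∧ ∀ x t : ℝ, 0 < t →
      (∫ y : ℝ, driftKernel d c (x - y) t * (1 + |y|) ^ (-r)) ≤
        C * ((1 + |x + c * t| + Real.sqrt t) ^ (-r) +
          Real.exp (-(x + c * t) ^ 2 / (M * (1 + t))) / Real.sqrt (1 + t)) := by
  obtain ⟨C, hC, hbound⟩ := exists_integral_gaussianReal_le_mul_envelope hr
  refine ⟨C * (1 + (2 * d)⁻¹) ^ r, by positivity, fun x t ht ↦ ?_⟩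
  lift 2 * d * t to ℝ≥0 using by positivity with v hv
  have hv₀ : v ≠ 0 := by
    rw [← NNReal.coe_ne_zero, hv]
    positivity
  rw [integral_driftKernel_mul_eq_integral_gaussianReal hv hv₀, mul_assoc]
  exact (hbound (x + c * t) v).trans <|
    mul_le_mul_of_nonneg_left (algebraicGaussianEnvelope_le_of_var_eq hd hM hr.le ht hv _) hC.le

/-- Linear heat-semigroup estimate for algebraically localized data. -/
theorem heat_semigroup_estimate_algebraic_data
    (d c M r : ℝ) (hd : 0 < d) (hM : 4 * d ≤ M) (hr : 3 ≤ r) :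
    ∃ C : ℝ, 0 < C ∧ ∀ x t : ℝ, 0 < t →
      (∫ y : ℝ, driftKernel d c (x - y) t * (1 + |y|) ^ (-r)) ≤
        C * ((1 + |x + c * t| + Real.sqrt t) ^ (-r) +
          Real.exp (-(x + c * t) ^ 2 / (M * (1 + t))) / Real.sqrt (1 + t)) :=
  heat_semigroup_estimate_algebraic_data_general d c M r hd hM (by linarith)
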